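/- arXiv:1710.08953 — 6 statements merged into one kernel-verified Lean document; each statement's English description precedes it below -/
import Mathlib

section
/- If a knapsack instance I (items A, nonnegative real sizes s_j for j in A, nonnegative real capacity c) has an equivalent simple graph, then I satisfies property P(I): for every subset A' of A, if s_j + s_{j'} ≤ c for all distinct j, j' in A', then the total size of A' is at most c. -/
/-- A set of vertices is independent in `G` if no two of its vertices are adjacent. -/
def SimpleGraph.IsIndep {V : Type*} (G : SimpleGraph V) (S : Set V) : Prop :=
  S.Pairwise fun u v => ¬ G.Adj u v

theorem isIndep_iff_forall_isIndep_pair {V : Type*} {G : SimpleGraph V} {S : Set V} :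
    G.IsIndep S ↔ ∀ u ∈ S, ∀ v ∈ S, G.IsIndep {u, v} :=
  ⟨fun hS _ hu _ hv => hS.mono (Set.pair_subset hu hv),
    fun h u hu v hv huv => h u hu v hv (Set.mem_insert u {v}) (Set.mem_insert_of_mem u rfl) huv⟩

theorem of_forall_pair_of_iff_isIndep_image {ι W : Type*} [DecidableEq ι] {F : Finset ι → Prop}
    {G : SimpleGraph W} {f : ι → W} (hF : ∀ A : Finset ι, F A ↔ G.IsIndep (f '' (A : Set ι)))
    {A : Finset ι} (hA : ∀ j ∈ A, ∀ j' ∈ A, j ≠ j' → F {j, j'}) : F A := by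
  rw [hF, isIndep_iff_forall_isIndep_pair]
  rintro _ ⟨j, hj, rfl⟩ _ ⟨j', hj', rfl⟩
  obtain rfl | hne := eq_or_ne j j'
  · rw [Set.pair_eq_singleton]
    exact Set.pairwise_singleton _ _
  · have hpair : G.IsIndep (f '' (({j, j'} : Finset ι) : Set ι)) :=
      (hF _).1 (hA j hj j' hj' hne)
    rwa [Finset.coe_pair, Set.image_pair] at hpair

theorem knapsack_equivalent_graph_implies_propertyP_general
    {ι W M : Type*} [AddCommMonoid M] [LE M] (s : ι → M) (c : M) (G : SimpleGraph W) (f : ι → W)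
    (hequiv : ∀ A : Finset ι, ∑ j ∈ A, s j ≤ c ↔ G.IsIndep (f '' (A : Set ι)))
    (A : Finset ι) (hA : ∀ j ∈ A, ∀ j' ∈ A, j ≠ j' → s j + s j' ≤ c) :
    ∑ j ∈ A, s j ≤ c := by
  classical
  refine of_forall_pair_of_iff_isIndep_image hequiv fun j hj j' hj' hne => ?_
  rw [Finset.sum_pair hne]
  exact hA j hj j' hj' hne

/-- if a knapsack instance (items `ι`, nonnegative sizes `s`, nonnegative
capacity `c`) has an equivalent simple graph, then it satisfies property `P(I)`. -/
theorem knapsack_equivalent_graph_implies_propertyP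
    {ι : Type} [Fintype ι] (s : ι → ℝ) (c : ℝ)
    (hs : ∀ j, 0 ≤ s j) (hc : 0 ≤ c)
    (hequiv : ∃ (W : Type) (G : SimpleGraph W) (f : ι ≃ W),
      ∀ A' : Finset ι, ((∑ j ∈ A', s j) ≤ c ↔ G.IsIndep (f '' (↑A' : Set ι)))) :
    ∀ A' : Finset ι,
      (∀ j ∈ A', ∀ j' ∈ A', j ≠ j' → s j + s j' ≤ c) → (∑ j ∈ A', s j) ≤ c := by
  obtain ⟨_, G, f, hf⟩ := hequiv
  exact knapsack_equivalent_graph_implies_propertyP_general s c G f hf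
end

section
/- For every finite split graph G with at least one vertex, the number of maximal independent sets of G is either ω(G) or ω(G)+1, where ω(G) is the clique number of G. -/
/-- A split graph: the vertex set can be partitioned into a clique and an
independent set (either part may be empty). -/
def SimpleGraph.IsSplit {V : Type*} (G : SimpleGraph V) : Prop :=
  ∃ K : Set V, G.IsClique K ∧ G.IsIndep Kᶜ

/-- The number of maximal independent sets of `G`. -/
noncomputable def numMaximalIndep {V : Type} [Fintype V] (G : SimpleGraph V) : ℕ :=
  {S : Set V | Maximal G.IsIndep S}.ncard

/-!
Write `V = K ∪ Kᶜ` with `K` a clique and `Kᶜ` independent. An independent set contains at most one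
vertex of `K`, and the only maximal one containing `v ∈ K` is the set of non-neighbours of `v`
(including `v` itself). These sets are distinct for distinct `v`, and the only other candidate is
`Kᶜ`, so there are `|K|` or `|K| + 1` maximal independent sets. A clique has at most one vertex
outside `K`; hence a clique larger than `K` contains `K`, and enlarging `K` to it if necessary we
may take `|K| = ω(G)`.
-/

section

variable {V : Type*} {G : SimpleGraph V} {K : Set V}

theorem isIndep_subset_compl_neighborSet {S : Set V} {v : V} (hS : G.IsIndep S) (hv : v ∈ S) :
    S ⊆ (G.neighborSet v)ᶜ :=
  fun _ hu hadj => hS hv hu hadj.ne hadj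

theorem isIndep_compl_neighborSet (hK : G.IsClique K) (hI : G.IsIndep Kᶜ) {v : V} (hv : v ∈ K) :
    G.IsIndep (G.neighborSet v)ᶜ := by
  have notMem_of_ne {u : V} (hu : u ∈ (G.neighborSet v)ᶜ) (huv : u ≠ v) : u ∈ Kᶜ :=
    fun huK => hu (hK hv huK huv.symm)
  intro a ha b hb hab hadj
  by_cases hav : a = v
  · exact hb (hav ▸ hadj)
  by_cases hbv : b = v
  · exact ha (hbv ▸ hadj.symm)
  exact hI (notMem_of_ne ha hav) (notMem_of_ne hb hbv) hab hadj

theorem maximal_isIndep_compl_neighborSet {v : V} (h : G.IsIndep (G.neighborSet v)ᶜ) :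
    Maximal G.IsIndep (G.neighborSet v)ᶜ :=
  ⟨h, fun _ hS hle => isIndep_subset_compl_neighborSet hS (hle (G.irrefl))⟩

theorem injOn_compl_neighborSet (hK : G.IsClique K) : K.InjOn fun v => (G.neighborSet v)ᶜ := by
  intro a ha b hb hab
  by_contra hne
  have hmem : b ∈ G.neighborSet b := compl_injective hab ▸ hK ha hb hne
  exact G.irrefl hmem

theorem compl_notMem_image_compl_neighborSet :
    Kᶜ ∉ (fun v => (G.neighborSet v)ᶜ) '' K := by
  rintro ⟨v, hv, h⟩
  have hvN : v ∈ (G.neighborSet v)ᶜ := G.irrefl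
  exact h.subset hvN hv

theorem image_compl_neighborSet_subset_setOf_maximal_isIndep (hK : G.IsClique K)
    (hI : G.IsIndep Kᶜ) :
    (fun v => (G.neighborSet v)ᶜ) '' K ⊆ {S | Maximal G.IsIndep S} := by
  rintro _ ⟨v, hv, rfl⟩
  exact maximal_isIndep_compl_neighborSet (isIndep_compl_neighborSet hK hI hv)

theorem setOf_maximal_isIndep_subset_insert_compl (hK : G.IsClique K) (hI : G.IsIndep Kᶜ) :
    {S | Maximal G.IsIndep S} ⊆ insert Kᶜ ((fun v => (G.neighborSet v)ᶜ) '' K) := by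
  intro S (hS : Maximal G.IsIndep S)
  by_cases hSK : S ⊆ Kᶜ
  · exact Or.inl (hS.eq_of_subset hI hSK)
  · obtain ⟨v, hvS, hvK⟩ := Set.not_subset.mp hSK
    rw [Set.notMem_compl_iff] at hvK
    have hSv : S ⊆ (G.neighborSet v)ᶜ := isIndep_subset_compl_neighborSet hS.prop hvS
    have hind : G.IsIndep (G.neighborSet v)ᶜ := isIndep_compl_neighborSet hK hI hvK
    exact Or.inr ⟨v, hvK, (hS.eq_of_subset hind hSv).symm⟩

theorem encard_setOf_maximal_isIndep_eq_or_eq_add_one (hK : G.IsClique K) (hI : G.IsIndep Kᶜ) :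
    {S | Maximal G.IsIndep S}.encard = K.encard ∨
      {S | Maximal G.IsIndep S}.encard = K.encard + 1 := by
  have hcard := (injOn_compl_neighborSet hK).encard_image
  rcases (Set.wcovBy_insert Kᶜ ((fun v => (G.neighborSet v)ᶜ) '' K)).eq_or_eq
      (image_compl_neighborSet_subset_setOf_maximal_isIndep hK hI)
      (setOf_maximal_isIndep_subset_insert_compl hK hI) with h | h
  · exact Or.inl (by rw [h, hcard])
  · exact Or.inr (by
      rw [h, Set.encard_insert_of_notMem compl_notMem_image_compl_neighborSet, hcard])

theorem encard_le_encard_inter_add_one_of_isClique {C : Set V} (hC : G.IsClique C)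
    (hI : G.IsIndep Kᶜ) : C.encard ≤ (C ∩ K).encard + 1 := by
  have hdiff : (C \ K).encard ≤ 1 := Set.encard_le_one_iff.mpr fun a b ha hb =>
    by_contra fun hab => hI ha.2 hb.2 hab (hC ha.1 hb.1 hab)
  calc C.encard = (C \ K).encard + (C ∩ K).encard := (Set.encard_sdiff_add_encard_inter C K).symm
    _ ≤ 1 + (C ∩ K).encard := by gcongr
    _ = (C ∩ K).encard + 1 := add_comm _ _

theorem subset_of_isClique_of_encard_lt {C : Set V} (hC : G.IsClique C) (hI : G.IsIndep Kᶜ)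
    (hlt : K.encard < C.encard) : K ⊆ C := by
  have hfin : K.Finite := Set.encard_ne_top_iff.mp hlt.ne_top
  have hle : K.encard + 1 ≤ (C ∩ K).encard + 1 :=
    (Order.add_one_le_of_lt hlt).trans (encard_le_encard_inter_add_one_of_isClique hC hI)
  have hinter : C ∩ K = K :=
    hfin.eq_of_subset_of_encard_le' Set.inter_subset_right
      ((ENat.add_le_add_iff_right ENat.one_ne_top).mp hle)
  exact Set.inter_eq_right.mp hinter

theorem exists_maximum_isClique_isIndep_compl (hG : G.IsSplit) :
    ∃ K : Set V, G.IsClique K ∧ G.IsIndep Kᶜ ∧ ∀ C, G.IsClique C → C.encard ≤ K.encard := by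
  obtain ⟨K, hK, hI⟩ := hG
  by_cases hmax : ∀ C, G.IsClique C → C.encard ≤ K.encard
  · exact ⟨K, hK, hI, hmax⟩
  push Not at hmax
  obtain ⟨Q, hQ, hlt⟩ := hmax
  have hKQ : K ⊆ Q := subset_of_isClique_of_encard_lt hQ hI hlt
  refine ⟨Q, hQ, hI.mono (Set.compl_subset_compl.mpr hKQ), fun C hC => ?_⟩
  calc C.encard ≤ (C ∩ K).encard + 1 := encard_le_encard_inter_add_one_of_isClique hC hI
    _ ≤ K.encard + 1 := by gcongr; exact Set.inter_subset_right
    _ ≤ Q.encard := Order.add_one_le_of_lt hlt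

theorem ncard_eq_cliqueNum_of_encard_le (hK : G.IsClique K) (hfin : K.Finite)
    (hmax : ∀ C, G.IsClique C → C.encard ≤ K.encard) : K.ncard = G.cliqueNum := by
  have hgreatest : IsGreatest {n | ∃ s, G.IsNClique n s} K.ncard := by
    constructor
    · exact ⟨hfin.toFinset, by simpa using hK, (Set.ncard_eq_toFinset_card K hfin).symm⟩
    · rintro _ ⟨s, hs, rfl⟩
      have hle := hmax s hs
      rwa [Set.encard_coe_eq_coe_finsetCard, ← hfin.cast_ncard_eq, Nat.cast_le] at hle
  exact hgreatest.csSup_eq.symm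

end

theorem split_graph_numMaximalIndep_eq_cliqueNum_or_succ_general
    {V : Type*} (G : SimpleGraph V) (hG : G.IsSplit)
    (hfin : ∀ C : Set V, G.IsClique C → C.Finite) :
    {S | Maximal G.IsIndep S}.ncard = G.cliqueNum ∨
      {S | Maximal G.IsIndep S}.ncard = G.cliqueNum + 1 := by
  obtain ⟨K, hK, hI, hmax⟩ := exists_maximum_isClique_isIndep_compl hG
  have hcard := encard_setOf_maximal_isIndep_eq_or_eq_add_one hK hI
  rw [← (hfin K hK).cast_ncard_eq, ncard_eq_cliqueNum_of_encard_le hK (hfin K hK) hmax] at hcard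
  exact hcard.imp (congrArg ENat.toNat) (congrArg ENat.toNat)

/-- a finite split graph with at least one vertex has either `ω(G)`
or `ω(G) + 1` maximal independent sets. -/
theorem split_graph_numMaximalIndep_eq_cliqueNum_or_succ
    {V : Type} [Fintype V] [Nonempty V] (G : SimpleGraph V) (hG : G.IsSplit) :
    numMaximalIndep G = G.cliqueNum ∨ numMaximalIndep G = G.cliqueNum + 1 :=
  split_graph_numMaximalIndep_eq_cliqueNum_or_succ_general G hG fun C _ => C.toFinite
end

section
/- For every finite threshold graph G with at least one vertex, the number of maximal independent sets of G is exactly ω(G), the clique number of G. -/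
/-- A threshold graph: there are nonnegative vertex weights and a nonnegative
threshold `T` such that a set of vertices is independent iff its total weight
is at most `T`. -/
def SimpleGraph.IsThreshold {V : Type} [Fintype V] (G : SimpleGraph V) : Prop :=
  ∃ (w : V → ℝ) (T : ℝ), (∀ v, 0 ≤ w v) ∧ 0 ≤ T ∧
    ∀ U : Finset V, ((∑ v ∈ U, w v) ≤ T ↔ G.IsIndep (↑U : Set V))

/-!
If `u` and `v` are non-adjacent vertices of a threshold graph, the heavier one sees every neighbour
of the lighter one. So a maximal independent set `S` contains a vertex `v` whose neighbourhood
contains those of all other members of `S`, and then `S` is exactly the set of non-neighbours of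
`v`. Two vertices whose sets of non-neighbours are distinct maximal independent sets must be
adjacent; picking one such `v` for each `S` therefore gives a clique. Conversely, in any finite
graph the vertices of a clique lie in pairwise different maximal independent sets.
-/

section

variable {V : Type*} {G : SimpleGraph V}

/-- Co-trivially perfect graphs, a class containing the threshold graphs and also, for example, the
4-cycle. They are usually defined as the graphs with no induced `P₄` or `2K₂`; the encoding here is
the equivalent condition that non-adjacent vertices have nested neighbourhoods. -/
def IsCotriviallyPerfect (G : SimpleGraph V) : Prop :=
  ∀ ⦃u v⦄, ¬ G.Adj u v →
    G.neighborSet u ⊆ G.neighborSet v ∨ G.neighborSet v ⊆ G.neighborSet u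

theorem not_adj_of_mem_isIndep {S : Set V} (hS : G.IsIndep S) {u v : V} (hu : u ∈ S) (hv : v ∈ S) :
    ¬ G.Adj u v :=
  fun huv => hS hu hv huv.ne huv

theorem mem_of_maximal_isIndep {S : Set V} (hS : Maximal G.IsIndep S) {v : V}
    (hv : ∀ s ∈ S, ¬ G.Adj v s) : v ∈ S := by
  have hins : G.IsIndep (insert v S) :=
    hS.prop.insert fun s hs _ => ⟨hv s hs, fun h => hv s hs h.symm⟩
  exact hS.mem_of_prop_insert hins

theorem nonempty_of_maximal_isIndep [Nonempty V] {S : Set V} (hS : Maximal G.IsIndep S) :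
    S.Nonempty := by
  by_contra! rfl
  exact mem_of_maximal_isIndep hS (v := Classical.arbitrary V) (by simp)

theorem compl_neighborSet_eq_of_maximal_isIndep {S : Set V} (hS : Maximal G.IsIndep S) {v : V}
    (hv : v ∈ S) (hdom : ∀ s ∈ S, G.neighborSet s ⊆ G.neighborSet v) :
    (G.neighborSet v)ᶜ = S := by
  refine Set.Subset.antisymm (fun u hu => ?_) fun s hs => not_adj_of_mem_isIndep hS.prop hv hs
  exact mem_of_maximal_isIndep hS fun s hs hus => hu (hdom s hs hus.symm)

theorem IsCotriviallyPerfect.exists_compl_neighborSet_eq [Finite V] [Nonempty V]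
    (hG : IsCotriviallyPerfect G) {S : Set V} (hS : Maximal G.IsIndep S) :
    ∃ v, (G.neighborSet v)ᶜ = S := by
  obtain ⟨v, hv⟩ :=
    S.toFinite.exists_maximalFor G.neighborSet S (nonempty_of_maximal_isIndep hS)
  refine ⟨v, compl_neighborSet_eq_of_maximal_isIndep hS hv.prop fun s hs => ?_⟩
  exact (hG (not_adj_of_mem_isIndep hS.prop hs hv.prop)).elim id (hv.le_of_le hs)

theorem compl_neighborSet_subset_of_not_adj {u v : V} (hu : G.IsIndep (G.neighborSet u)ᶜ)
    (huv : ¬ G.Adj u v) : (G.neighborSet u)ᶜ ⊆ (G.neighborSet v)ᶜ :=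
  fun _ hx => not_adj_of_mem_isIndep hu huv hx

theorem ncard_maximal_isIndep_le_cliqueNum [Finite V]
    (h : ∀ S, Maximal G.IsIndep S → ∃ v, (G.neighborSet v)ᶜ = S) :
    {S | Maximal G.IsIndep S}.ncard ≤ G.cliqueNum := by
  have hsurj : Set.SurjOn (fun v => (G.neighborSet v)ᶜ) Set.univ {S | Maximal G.IsIndep S} :=
    fun S hS => (h S hS).imp fun v hv => ⟨Set.mem_univ v, hv⟩
  obtain ⟨K, -, hK⟩ := hsurj.exists_bijOn_subset
  have hclique : G.IsClique K := by
    intro u hu v hv huv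
    by_contra hadj
    have hsubset := compl_neighborSet_subset_of_not_adj (hK.mapsTo hu).prop hadj
    exact huv (hK.injOn hu hv ((hK.mapsTo hu).eq_of_subset (hK.mapsTo hv).prop hsubset))
  calc {S | Maximal G.IsIndep S}.ncard
      = K.ncard := by rw [← hK.image_eq, hK.injOn.ncard_image]
    _ = K.toFinite.toFinset.card := Set.ncard_eq_toFinset_card K
    _ ≤ G.cliqueNum := SimpleGraph.IsClique.card_le_cliqueNum (tc := by simpa using hclique)

theorem exists_mem_maximal_isIndep [Finite V] (G : SimpleGraph V) (v : V) :
    ∃ S, v ∈ S ∧ Maximal G.IsIndep S := by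
  have hv : G.IsIndep {v} := Set.pairwise_singleton v _
  obtain ⟨S, hvS, hS⟩ := Finite.exists_le_maximal hv
  exact ⟨S, hvS rfl, hS⟩

theorem cliqueNum_le_ncard_maximal_isIndep [Finite V] (G : SimpleGraph V) :
    G.cliqueNum ≤ {S | Maximal G.IsIndep S}.ncard := by
  obtain ⟨K, hK⟩ := G.exists_isNClique_cliqueNum
  choose f hmem hmax using exists_mem_maximal_isIndep G
  have hinj : Set.InjOn f K := by
    intro u hu v hv huv
    by_contra hne
    exact not_adj_of_mem_isIndep (hmax u).prop (hmem u) (huv ▸ hmem v) (hK.isClique hu hv hne)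
  rw [← hK.card_eq, ← Set.ncard_coe_finset]
  exact Set.ncard_le_ncard_of_injOn f (fun v _ => hmax v) hinj

theorem threshold_graph_numMaximalIndep_eq_cliqueNum_general [Finite V] [Nonempty V]
    (hG : IsCotriviallyPerfect G) : {S | Maximal G.IsIndep S}.ncard = G.cliqueNum :=
  (ncard_maximal_isIndep_le_cliqueNum fun _ => hG.exists_compl_neighborSet_eq).antisymm
    (cliqueNum_le_ncard_maximal_isIndep G)

theorem neighborSet_subset_of_weight_le {R : Type*} [Add R] [Preorder R] [AddRightMono R]
    {w : V → R} {T : R} (hw : ∀ ⦃u v⦄, u ≠ v → (w u + w v ≤ T ↔ ¬ G.Adj u v)) {u v : V}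
    (huv : ¬ G.Adj u v) (hle : w u ≤ w v) : G.neighborSet u ⊆ G.neighborSet v := by
  intro x (hux : G.Adj u x)
  have hvx : v ≠ x := by rintro rfl; exact huv hux
  by_contra hadj
  have hle_T : w u + w x ≤ T := (add_le_add_left hle (w x)).trans ((hw hvx).2 hadj)
  exact (hw hux.ne).1 hle_T hux

theorem isIndep_pair_iff {u v : V} (huv : u ≠ v) : G.IsIndep {u, v} ↔ ¬ G.Adj u v := by
  simp [SimpleGraph.IsIndep, Set.pairwise_pair, huv, G.adj_comm v u]

end

theorem IsCotriviallyPerfect.of_isThreshold {V : Type} [Fintype V] {G : SimpleGraph V}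
    (hG : G.IsThreshold) : IsCotriviallyPerfect G := by
  classical
  obtain ⟨w, T, -, -, hindep⟩ := hG
  have hpair : ∀ ⦃u v⦄, u ≠ v → (w u + w v ≤ T ↔ ¬ G.Adj u v) := by
    intro u v huv
    rw [← Finset.sum_pair huv, hindep, Finset.coe_pair, isIndep_pair_iff huv]
  intro u v huv
  exact (le_total (w u) (w v)).imp (neighborSet_subset_of_weight_le hpair huv)
    (neighborSet_subset_of_weight_le hpair fun hvu => huv hvu.symm)

/-- a finite threshold graph with at least one vertex has exactly
`ω(G)` maximal independent sets. -/
theorem threshold_graph_numMaximalIndep_eq_cliqueNum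
    {V : Type} [Fintype V] [Nonempty V] (G : SimpleGraph V) (hG : G.IsThreshold) :
    numMaximalIndep G = G.cliqueNum := by
  exact threshold_graph_numMaximalIndep_eq_cliqueNum_general (.of_isThreshold hG)
end

section
/- Let G be a finite threshold graph with at least one vertex whose maximum vertex degree is at most d. Then the number of maximal independent sets of G is at most d+1. -/
/-!
In a threshold graph the vicinal preorder `N(u) \ {v} ⊆ N(v)` is total, since a heavier vertex
dominates a lighter one. When it is total and degrees are bounded, a vertex of largest degree in a
set is vicinally greatest there, even if the set is infinite. A maximal independent set `S` is the
complement of the neighborhood of a vicinally greatest `v ∈ S`: a vertex outside `S` has a neighbor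
in `S`, hence is a neighbor of `v`.
Fix a vertex `m` that is vicinally greatest in the whole graph. Either `m ∈ S`, and one may take
`v = m`, or `m ∉ S`, and `v` is a neighbor of `m`. Thus `S` is determined by a vertex of the closed
neighborhood of `m`, which has at most `d + 1` elements.
-/

section Vicinal

variable {V : Type*} {G : SimpleGraph V}

/-- The vicinal preorder on the vertices of a graph, `N(u) \ {v} ⊆ N(v)`. The vertex `v` is removed
so that adjacent vertices can be comparable. Its totality is what the bound on maximal independent
sets needs from a threshold graph. -/
def VicinalLE (G : SimpleGraph V) (u v : V) : Prop :=
  G.neighborSet u \ {v} ⊆ G.neighborSet v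

theorem vicinalLE_of_weight_le {M : Type*} [Add M] [Preorder M] [AddRightMono M] {w : V → M} {T : M}
    (hadj : ∀ ⦃u v⦄, u ≠ v → (G.Adj u v ↔ T < w u + w v)) {u v : V} (huv : w u ≤ w v) :
    VicinalLE G u v := by
  rintro x ⟨hux : G.Adj u x, hxv : x ≠ v⟩
  refine (hadj hxv.symm).2 ?_
  calc T < w u + w x := (hadj hux.ne).1 hux
    _ ≤ w v + w x := by gcongr

theorem VicinalLE.symm_of_degree_le {u v : V} [Fintype (G.neighborSet u)]
    [Fintype (G.neighborSet v)] (hvu : VicinalLE G v u) (hdeg : G.degree u ≤ G.degree v) :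
    VicinalLE G u v := by
  classical
  have hsub : (G.neighborFinset v).erase u ⊆ (G.neighborFinset u).erase v := fun x hx => by
    simp only [Finset.mem_erase, SimpleGraph.mem_neighborFinset] at hx ⊢
    exact ⟨hx.2.ne', hvu ⟨hx.2, hx.1⟩⟩
  have hcard : ((G.neighborFinset u).erase v).card ≤ ((G.neighborFinset v).erase u).card := by
    simp only [Finset.card_erase_eq_ite, SimpleGraph.mem_neighborFinset, G.adj_comm v u,
      SimpleGraph.card_neighborFinset_eq_degree]
    split_ifs <;> omega
  have heq := Finset.eq_of_subset_of_card_le hsub hcard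
  rintro x ⟨hux : G.Adj u x, hxv : x ≠ v⟩
  have hx : x ∈ (G.neighborFinset v).erase u := by
    rw [heq]
    exact Finset.mem_erase.2 ⟨hxv, (G.mem_neighborFinset u x).2 hux⟩
  exact (G.mem_neighborFinset v x).1 (Finset.mem_of_mem_erase hx)

theorem exists_vicinalLE_greatest [G.LocallyFinite]
    (htotal : ∀ u v, VicinalLE G u v ∨ VicinalLE G v u) {d : ℕ} (hdeg : ∀ v, G.degree v ≤ d)
    {S : Set V} (hS : S.Nonempty) : ∃ v ∈ S, ∀ u ∈ S, VicinalLE G u v := by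
  have hfin : ((fun v => G.degree v) '' S).Finite :=
    (Set.finite_Iic d).subset (Set.image_subset_iff.2 fun v _ => hdeg v)
  obtain ⟨v, hvS, hmax⟩ := Set.Finite.exists_maximalFor' _ _ hfin hS
  refine ⟨v, hvS, fun u huS => (htotal u v).elim id fun hvu => hvu.symm_of_degree_le ?_⟩
  exact (le_total (G.degree u) (G.degree v)).elim id (hmax huS)

end Vicinal

section MaximalIndep

variable {V : Type*} {G : SimpleGraph V} {S : Set V}

theorem exists_mem_adj_of_maximal_isIndep (hS : Maximal G.IsIndep S) {x : V} (hx : x ∉ S) :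
    ∃ y ∈ S, G.Adj y x := by
  by_contra! hnot
  have hindep : G.IsIndep (insert x S) :=
    Set.Pairwise.insert hS.prop fun y hy _ => ⟨fun h => hnot y hy h.symm, hnot y hy⟩
  exact hx (hS.le_of_ge hindep (Set.subset_insert x S) (Set.mem_insert x S))

theorem eq_compl_neighborSet_of_maximal_isIndep (hS : Maximal G.IsIndep S) {v : V} (hv : v ∈ S)
    (hgreatest : ∀ u ∈ S, VicinalLE G u v) : S = (G.neighborSet v)ᶜ := by
  refine Set.Subset.antisymm (fun x hx hvx => hS.prop hv hx hvx.ne hvx) fun x hx => ?_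
  by_contra hxS
  obtain ⟨y, hyS, hyx⟩ := exists_mem_adj_of_maximal_isIndep hS hxS
  exact hx (hgreatest y hyS ⟨hyx, fun hxv => hxS (hxv ▸ hv)⟩)

theorem maximal_isIndep_subset_image_compl_neighborSet
    (hex : ∀ S : Set V, S.Nonempty → ∃ v ∈ S, ∀ u ∈ S, VicinalLE G u v)
    {m : V} (hm : ∀ u, VicinalLE G u m) :
    {S : Set V | Maximal G.IsIndep S} ⊆
      (fun v => (G.neighborSet v)ᶜ) '' insert m (G.neighborSet m) := by
  intro S hS
  by_cases hmS : m ∈ S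
  · exact ⟨m, Set.mem_insert _ _,
      (eq_compl_neighborSet_of_maximal_isIndep hS hmS fun u _ => hm u).symm⟩
  · obtain ⟨y, hyS, -⟩ := exists_mem_adj_of_maximal_isIndep hS hmS
    obtain ⟨v, hvS, hgreatest⟩ := hex S ⟨y, hyS⟩
    have hSv : S = (G.neighborSet v)ᶜ := eq_compl_neighborSet_of_maximal_isIndep hS hvS hgreatest
    have hvm : G.Adj v m := by
      rw [hSv] at hmS
      exact not_not.1 hmS
    exact ⟨v, Set.mem_insert_of_mem _ hvm.symm, hSv.symm⟩

end MaximalIndep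

section Threshold

variable {V : Type} [Fintype V] {G : SimpleGraph V}

theorem exists_weight_adj_iff_of_isThreshold (hG : G.IsThreshold) :
    ∃ (w : V → ℝ) (T : ℝ), ∀ ⦃u v⦄, u ≠ v → (G.Adj u v ↔ T < w u + w v) := by
  classical
  obtain ⟨w, T, -, -, hindep⟩ := hG
  refine ⟨w, T, fun u v huv => ?_⟩
  have hpair : G.IsIndep (↑({u, v} : Finset V) : Set V) ↔ ¬ G.Adj u v := by
    rw [SimpleGraph.IsIndep, Finset.coe_pair, Set.pairwise_pair]
    simp only [G.adj_comm v u, and_self, huv, ne_eq, not_false_eq_true, forall_const]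
  rw [← not_le, ← Finset.sum_pair huv, hindep, hpair, not_not]

theorem vicinalLE_total_of_isThreshold (hG : G.IsThreshold) (u v : V) :
    VicinalLE G u v ∨ VicinalLE G v u := by
  obtain ⟨w, T, hadj⟩ := exists_weight_adj_iff_of_isThreshold hG
  exact (le_total (w u) (w v)).imp (vicinalLE_of_weight_le hadj) (vicinalLE_of_weight_le hadj)

end Threshold

theorem threshold_graph_max_degree_numMaximalIndep_le_general
    {V : Type*} (G : SimpleGraph V) [G.LocallyFinite]
    (htotal : ∀ u v, VicinalLE G u v ∨ VicinalLE G v u) (d : ℕ) (hdeg : ∀ v, G.degree v ≤ d) :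
    {S : Set V | Maximal G.IsIndep S}.encard ≤ d + 1 := by
  cases isEmpty_or_nonempty V
  · exact (Set.encard_le_one_iff_subsingleton.2 Set.subsingleton_of_subsingleton).trans le_add_self
  obtain ⟨m, -, hm⟩ := exists_vicinalLE_greatest htotal hdeg Set.univ_nonempty
  calc {S : Set V | Maximal G.IsIndep S}.encard
      ≤ ((fun v => (G.neighborSet v)ᶜ) '' insert m (G.neighborSet m)).encard :=
        Set.encard_le_encard <| maximal_isIndep_subset_image_compl_neighborSet
          (fun _ hS => exists_vicinalLE_greatest htotal hdeg hS) fun u => hm u (Set.mem_univ u)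
    _ ≤ (insert m (G.neighborSet m)).encard := Set.encard_image_le _ _
    _ ≤ (G.neighborSet m).encard + 1 := Set.encard_insert_le _ _
    _ = G.degree m + 1 := by
      rw [← G.card_neighborSet_eq_degree, Set.coe_fintypeCard]
    _ ≤ d + 1 := by gcongr; exact hdeg m

/-- a finite threshold graph with at least one vertex and maximum
degree at most `d` has at most `d + 1` maximal independent sets. -/
theorem threshold_graph_max_degree_numMaximalIndep_le
    {V : Type} [Fintype V] [Nonempty V] (G : SimpleGraph V) [DecidableRel G.Adj]
    (hG : G.IsThreshold) (d : ℕ) (hdeg : ∀ v, G.degree v ≤ d) :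
    numMaximalIndep G ≤ d + 1 := by
  have hle := threshold_graph_max_degree_numMaximalIndep_le_general G
    (vicinalLE_total_of_isThreshold hG) d hdeg
  exact (Set.encard_le_coe_iff_finite_ncard_le.1 (by exact_mod_cast hle)).2
end

section
/- If a d-dimensional knapsack instance I (items A, nonnegative real sizes s_{i,j}, nonnegative real capacities c_1,…,c_d) has an equivalent simple graph, then I satisfies property P_d(I): for every subset A' of A, if for every dimension i and all distinct j, j' in A' one has s_{i,j} + s_{i,j'} ≤ c_i, then for every dimension i the total size ∑_{j∈A'} s_{i,j} is at most c_i. -/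
section Independence

variable {ι W : Type*} {G : SimpleGraph W} {f : ι → W}

theorem isIndep_image_iff {S : Set ι} :
    G.IsIndep (f '' S) ↔ S.Pairwise fun a b => ¬ G.Adj (f a) (f b) :=
  ⟨fun h _ ha _ hb _ hadj =>
      h (Set.mem_image_of_mem f ha) (Set.mem_image_of_mem f hb) hadj.ne hadj,
    fun h => Set.Pairwise.image h⟩

theorem isIndep_image_pair_iff {a b : ι} :
    G.IsIndep (f '' {a, b}) ↔ ¬ G.Adj (f a) (f b) := by
  rw [isIndep_image_iff, Set.pairwise_pair, G.adj_comm (f b), and_self]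
  exact ⟨fun h hadj => h (ne_of_apply_ne f hadj.ne) hadj, fun h _ => h⟩

theorem isIndep_image_iff_pairwise_pair {S : Set ι} :
    G.IsIndep (f '' S) ↔ S.Pairwise fun a b => G.IsIndep (f '' {a, b}) := by
  simp only [isIndep_image_pair_iff]
  exact isIndep_image_iff

end Independence

/-- Feasibility of the selection `A` in the knapsack instance with sizes `s i j` and capacities
`c i`. Dimensions `i` and items `j` range over arbitrary types, so selections are finite sets. -/
def IsKnapsackFeasible {κ ι M : Type*} [AddCommMonoid M] [LE M]
    (s : κ → ι → M) (c : κ → M) (A : Finset ι) : Prop :=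
  ∀ i, ∑ j ∈ A, s i j ≤ c i

section Knapsack

variable {κ ι W M : Type*} [AddCommMonoid M] [LE M] {s : κ → ι → M} {c : κ → M}

theorem isKnapsackFeasible_pair_iff [DecidableEq ι] {j j' : ι} (hne : j ≠ j') :
    IsKnapsackFeasible s c {j, j'} ↔ ∀ i, s i j + s i j' ≤ c i := by
  simp only [IsKnapsackFeasible, Finset.sum_pair hne]

theorem multidim_knapsack_equivalent_graph_implies_propertyPd_general
    (G : SimpleGraph W) (f : ι → W)
    (hequiv : ∀ A : Finset ι, IsKnapsackFeasible s c A ↔ G.IsIndep (f '' (A : Set ι)))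
    (A : Finset ι)
    (hpairs : ∀ i, ∀ j ∈ A, ∀ j' ∈ A, j ≠ j' → s i j + s i j' ≤ c i) :
    IsKnapsackFeasible s c A := by
  classical
  rw [hequiv, isIndep_image_iff_pairwise_pair]
  intro j hj j' hj' hne
  have hfeasible : IsKnapsackFeasible s c {j, j'} :=
    (isKnapsackFeasible_pair_iff hne).2 fun i => hpairs i j hj j' hj' hne
  simpa only [Finset.coe_pair] using (hequiv {j, j'}).1 hfeasible

end Knapsack

/-- if a `d`-dimensional knapsack instance has an equivalent
simple graph, then it satisfies property `P_d(I)`. -/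
theorem multidim_knapsack_equivalent_graph_implies_propertyPd
    {ι : Type} [Fintype ι] {d : ℕ} (hd : 0 < d)
    (s : Fin d → ι → ℝ) (c : Fin d → ℝ)
    (hs : ∀ i j, 0 ≤ s i j) (hc : ∀ i, 0 ≤ c i)
    (hequiv : ∃ (W : Type) (G : SimpleGraph W) (f : ι ≃ W),
      ∀ A' : Finset ι,
        ((∀ i : Fin d, (∑ j ∈ A', s i j) ≤ c i) ↔ G.IsIndep (f '' (↑A' : Set ι)))) :
    ∀ A' : Finset ι,
      (∀ i : Fin d, ∀ j ∈ A', ∀ j' ∈ A', j ≠ j' → s i j + s i j' ≤ c i) →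
      (∀ i : Fin d, (∑ j ∈ A', s i j) ≤ c i) := by
  obtain ⟨_, G, f, hf⟩ := hequiv
  exact multidim_knapsack_equivalent_graph_implies_propertyPd_general G f hf
end

section
/- Let G = (V,E) be a finite simple graph with at least one vertex whose maximum vertex degree is at most d and whose edge set is the union E = E_1 ∪ … ∪ E_k of the edge sets of threshold graphs G_1 = (V,E_1), …, G_k = (V,E_k). Then the number of maximal independent sets of G is at most (d+1)^k. -/
/-!
The open neighbourhood `N_G(S)` of a maximal independent set `S` of `G` is the complement of `S`.
When `G` is the union of `G₁, …, G_k`, also `N_G(S) = ⋃ i, N_{G_i}(S)`, so `S` is determined by the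
tuple of its open neighbourhoods `N_{G_i}(S)`, and it suffices to see that each of these takes at
most `d + 1` values.

The neighbourhoods in a threshold graph `H` grow with the weight. Hence `N_H(S)` is either empty or
the neighbourhood `N_H(v)` of the heaviest non-isolated `v ∈ S`, and a heaviest non-isolated vertex
`c` of `H` is adjacent to every other one, so that `v` lies in the closed neighbourhood of `c`.
If `N_H(c) ≠ N_G(c)`, these are at most `1 + ((d - 1) + 1)` values. If `N_H(c) = N_G(c)`, the value
`∅` does not occur, because a maximal independent set of `G` meets the closed neighbourhood of `c`.
-/

section OpenNeighborhood

variable {V : Type*} {G H : SimpleGraph V} {S : Set V}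

/-- The open neighbourhood `N_G(S)` of a set of vertices: all vertices with a neighbour in `S`. It
may meet `S`, and is disjoint from `S` exactly when `S` is independent. -/
def openNeighborhood (G : SimpleGraph V) (S : Set V) : Set V :=
  ⋃ v ∈ S, G.neighborSet v

theorem mem_openNeighborhood {x : V} : x ∈ openNeighborhood G S ↔ ∃ v ∈ S, G.Adj v x := by
  simp [openNeighborhood]

theorem openNeighborhood_iSup {ι : Sort*} (H : ι → SimpleGraph V) (S : Set V) :
    openNeighborhood (⨆ i, H i) S = ⋃ i, openNeighborhood (H i) S := by
  ext x
  simp only [Set.mem_iUnion, mem_openNeighborhood, SimpleGraph.iSup_adj]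
  tauto

theorem openNeighborhood_subset_support : openNeighborhood G S ⊆ G.support := by
  intro x hx
  obtain ⟨v, -, hvx⟩ := mem_openNeighborhood.1 hx
  exact hvx.mem_support_right

theorem disjoint_openNeighborhood_iff_isIndep :
    Disjoint S (openNeighborhood G S) ↔ G.IsIndep S := by
  simp only [Set.disjoint_left, mem_openNeighborhood, not_exists, not_and]
  exact ⟨fun h u hu v hv _ huv => h hv u hu huv, fun h v hv u hu huv => h hu hv huv.ne huv⟩

theorem openNeighborhood_eq_compl_of_maximal (hS : Maximal G.IsIndep S) :
    openNeighborhood G S = Sᶜ := by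
  refine (disjoint_openNeighborhood_iff_isIndep.2 hS.prop).subset_compl_left.antisymm ?_
  intro x hxS
  by_contra hx
  have hnadj : ∀ v ∈ S, ¬ G.Adj v x := by simpa [mem_openNeighborhood] using hx
  have hins : G.IsIndep (insert x S) :=
    Set.Pairwise.insert hS.prop fun v hv _ => ⟨fun h => hnadj v hv h.symm, hnadj v hv⟩
  exact hxS (hS.le_of_ge hins (Set.subset_insert x S) (Set.mem_insert x S))

theorem injOn_openNeighborhood_of_iSup {ι : Type*} (H : ι → SimpleGraph V) :
    Set.InjOn (fun S i => openNeighborhood (H i) S) {S | Maximal (⨆ i, H i).IsIndep S} := by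
  intro S hS S' hS' heq
  apply compl_injective
  rw [← openNeighborhood_eq_compl_of_maximal hS, ← openNeighborhood_eq_compl_of_maximal hS',
    openNeighborhood_iSup, openNeighborhood_iSup]
  exact Set.iUnion_congr (congrFun heq)

theorem openNeighborhood_nonempty_of_maximal {c : V} (hS : Maximal G.IsIndep S)
    (hc : c ∈ H.support) (hHG : H.neighborSet c = G.neighborSet c) :
    (openNeighborhood H S).Nonempty := by
  by_cases hcS : c ∈ S
  · obtain ⟨x, hcx⟩ := hc
    exact ⟨x, mem_openNeighborhood.2 ⟨c, hcS, hcx⟩⟩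
  · have hcN : c ∈ openNeighborhood G S := by rwa [openNeighborhood_eq_compl_of_maximal hS]
    obtain ⟨v, hv, hvc⟩ := mem_openNeighborhood.1 hcN
    have hcv : v ∈ H.neighborSet c := hHG ▸ hvc.symm
    exact ⟨c, mem_openNeighborhood.2 ⟨v, hv, hcv.symm⟩⟩

end OpenNeighborhood

/-- `w` ranks the vertices of `G` by dominance: a vertex is adjacent to all neighbours, itself
excepted, of any vertex of smaller or equal rank. A rank in some linear order exists exactly when
the vicinal preorder of `G` is total. It is the order-theoretic content of the weights of a
threshold graph, and it makes sense without any finiteness. -/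
def IsDominanceRank {V α : Type*} [LE α] (G : SimpleGraph V) (w : V → α) : Prop :=
  ∀ ⦃u v x⦄, w u ≤ w v → G.Adj u x → v ≠ x → G.Adj v x

namespace IsDominanceRank

variable {V α : Type*} [LinearOrder α] {G H : SimpleGraph V} {w : V → α} {S : Set V}

-- Every edge `x y` is close to a fixed edge `a b`: if `x` dominates `a`, it is adjacent to `b`, and
-- otherwise `a` is adjacent to `y`, up to coincidences among the four vertices.
theorem finite_support (hw : IsDominanceRank H w) (hfin : ∀ v, (H.neighborSet v).Finite) :
    H.support.Finite := by
  rcases H.support.eq_empty_or_nonempty with hempty | ⟨a, b, hab⟩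
  · simp [hempty]
  have hnear : H.support ⊆
      insert b (H.neighborSet b) ∪ openNeighborhood H (insert a (H.neighborSet a)) := by
    rintro x ⟨y, hxy⟩
    rcases le_total (w a) (w x) with hax | hxa
    · left
      by_cases hxb : x = b
      · exact Or.inl hxb
      · exact Or.inr (hw hax hab hxb).symm
    · right
      refine mem_openNeighborhood.2 ⟨y, ?_, hxy.symm⟩
      by_cases hay : a = y
      · exact Or.inl hay.symm
      · exact Or.inr (hw hxa hxy hay)
  exact (((hfin b).insert b).union
    (((hfin a).insert a).biUnion fun v _ => hfin v)).subset hnear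

theorem exists_support_subset_insert_neighborSet (hw : IsDominanceRank H w)
    (hfin : H.support.Finite) (hne : H.support.Nonempty) :
    ∃ c ∈ H.support, H.support ⊆ insert c (H.neighborSet c) := by
  obtain ⟨c, hc, hmax⟩ := H.support.exists_max_image w hfin hne
  refine ⟨c, hc, ?_⟩
  rintro u ⟨x, hux⟩
  by_cases huc : u = c
  · exact Or.inl huc
  · have hxc : w x ≤ w c := hmax x hux.mem_support_right
    exact Or.inr (hw hxc hux.symm (Ne.symm huc))

theorem exists_openNeighborhood_eq_neighborSet (hw : IsDominanceRank H w)
    (hfin : (S ∩ H.support).Finite) (hS : H.IsIndep S) (hne : (openNeighborhood H S).Nonempty) :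
    ∃ v ∈ S ∩ H.support, openNeighborhood H S = H.neighborSet v := by
  have hne' : (S ∩ H.support).Nonempty := by
    obtain ⟨x, hx⟩ := hne
    obtain ⟨u, hu, hux⟩ := mem_openNeighborhood.1 hx
    exact ⟨u, hu, hux.mem_support_left⟩
  obtain ⟨v, hv, hmax⟩ := (S ∩ H.support).exists_max_image w hfin hne'
  refine ⟨v, hv, Set.Subset.antisymm ?_ (Set.subset_biUnion_of_mem hv.1)⟩
  intro x hx
  obtain ⟨u, hu, hux⟩ := mem_openNeighborhood.1 hx
  have hvx : v ≠ x :=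
    (disjoint_openNeighborhood_iff_isIndep.2 hS).ne_of_mem hv.1 hx
  exact hw (hmax u ⟨hu, hux.mem_support_left⟩) hux hvx

theorem openNeighborhood_mem_image_neighborSet (hw : IsDominanceRank H w) {c : V}
    (hdom : H.support ⊆ insert c (H.neighborSet c)) (hfin : (S ∩ H.support).Finite)
    (hS : H.IsIndep S) (hne : (openNeighborhood H S).Nonempty) :
    openNeighborhood H S ∈ H.neighborSet '' insert c (H.neighborSet c) := by
  obtain ⟨v, hv, heq⟩ := hw.exists_openNeighborhood_eq_neighborSet hfin hS hne
  exact heq ▸ Set.mem_image_of_mem _ (hdom hv.2)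

theorem encard_image_openNeighborhood_le_of_support_subset (hw : IsDominanceRank H w)
    (hHG : H ≤ G) (hfin : H.support.Finite) {c : V} (hc : c ∈ H.support)
    (hdom : H.support ⊆ insert c (H.neighborSet c)) :
    (openNeighborhood H '' {S | Maximal G.IsIndep S}).encard ≤ (G.neighborSet c).encard + 1 := by
  set F : Set (Set V) := H.neighborSet '' insert c (H.neighborSet c)
  have hF : F.encard ≤ (H.neighborSet c).encard + 1 :=
    (Set.encard_image_le _ _).trans (Set.encard_insert_le _ _)
  have hmem {S : Set V} (hS : Maximal G.IsIndep S) (hne : (openNeighborhood H S).Nonempty) :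
      openNeighborhood H S ∈ F :=
    hw.openNeighborhood_mem_image_neighborSet hdom (hfin.inter_of_right S)
      (hS.prop.imp fun _ _ hG hH => hG (hHG hH)) hne
  by_cases hcG : H.neighborSet c = G.neighborSet c
  · have himage : openNeighborhood H '' {S | Maximal G.IsIndep S} ⊆ F := by
      rintro _ ⟨S, hS, rfl⟩
      exact hmem hS (openNeighborhood_nonempty_of_maximal hS hc hcG)
    exact hcG ▸ (Set.encard_le_encard himage).trans hF
  · have himage : openNeighborhood H '' {S | Maximal G.IsIndep S} ⊆ insert ∅ F := by
      rintro _ ⟨S, hS, rfl⟩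
      exact (openNeighborhood H S).eq_empty_or_nonempty.imp id (hmem hS)
    have hlt : (H.neighborSet c).encard < (G.neighborSet c).encard := by
      have hNfin : (H.neighborSet c).Finite := hfin.subset fun _ h => h.mem_support_right
      have hsub : H.neighborSet c ⊆ G.neighborSet c := fun _ h => hHG h
      exact hNfin.encard_lt_encard (hsub.ssubset_of_ne hcG)
    calc (openNeighborhood H '' {S | Maximal G.IsIndep S}).encard
        ≤ F.encard + 1 := (Set.encard_le_encard himage).trans (Set.encard_insert_le _ _)
      _ ≤ (H.neighborSet c).encard + 1 + 1 := by gcongr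
      _ ≤ (G.neighborSet c).encard + 1 := by gcongr; exact Order.add_one_le_of_lt hlt

theorem encard_image_openNeighborhood_le (hw : IsDominanceRank H w) (hHG : H ≤ G) {d : ℕ}
    (hdeg : ∀ v, (G.neighborSet v).encard ≤ d) :
    (openNeighborhood H '' {S | Maximal G.IsIndep S}).encard ≤ d + 1 := by
  have hfin : H.support.Finite := hw.finite_support fun v =>
    (Set.finite_of_encard_le_coe (hdeg v)).subset fun _ h => hHG h
  rcases H.support.eq_empty_or_nonempty with hempty | hne
  · have himage : openNeighborhood H '' {S | Maximal G.IsIndep S} ⊆ {∅} := by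
      rintro _ ⟨S, -, rfl⟩
      exact Set.subset_empty_iff.1 (hempty ▸ openNeighborhood_subset_support)
    calc (openNeighborhood H '' {S | Maximal G.IsIndep S}).encard
        ≤ ({∅} : Set (Set V)).encard := Set.encard_le_encard himage
      _ = 1 := Set.encard_singleton ∅
      _ ≤ d + 1 := le_add_self
  · obtain ⟨c, hc, hdom⟩ := hw.exists_support_subset_insert_neighborSet hfin hne
    calc (openNeighborhood H '' {S | Maximal G.IsIndep S}).encard
        ≤ (G.neighborSet c).encard + 1 :=
          hw.encard_image_openNeighborhood_le_of_support_subset hHG hfin hc hdom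
      _ ≤ d + 1 := by gcongr; exact hdeg c

end IsDominanceRank

theorem exists_isDominanceRank_of_isThreshold {V : Type} [Fintype V] {G : SimpleGraph V}
    (hG : G.IsThreshold) : ∃ w : V → ℝ, IsDominanceRank G w := by
  classical
  obtain ⟨w, T, -, -, hindep⟩ := hG
  have hadj {u v : V} (huv : u ≠ v) : G.Adj u v ↔ T < w u + w v := by
    rw [← Finset.sum_pair huv, ← not_le, hindep {u, v}, Finset.coe_pair, SimpleGraph.IsIndep,
      Set.pairwise_pair]
    simp [huv, G.adj_comm v u]
  refine ⟨w, fun u v x huv hux hvx => (hadj hvx).2 ?_⟩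
  linarith [(hadj hux.ne).1 hux]

theorem numMaximalIndep_le_pow_of_threshold_cover_max_degree_general
    {V ι α : Type*} [Fintype ι] [LinearOrder α] (G : SimpleGraph V) (H : ι → SimpleGraph V)
    (w : ι → V → α) (hw : ∀ i, IsDominanceRank (H i) (w i)) (hcover : G = ⨆ i, H i)
    (d : ℕ) (hdeg : ∀ v, (G.neighborSet v).encard ≤ d) :
    {S : Set V | Maximal G.IsIndep S}.encard ≤ (d + 1) ^ Fintype.card ι := by
  set M : Set (Set V) := {S | Maximal G.IsIndep S}
  have hinj : M.InjOn fun S i => openNeighborhood (H i) S := by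
    subst hcover
    exact injOn_openNeighborhood_of_iSup H
  calc M.encard
      ≤ (Set.univ.pi fun i => openNeighborhood (H i) '' M).encard :=
        Set.encard_le_encard_of_injOn (fun S hS i _ => Set.mem_image_of_mem _ hS) hinj
    _ = ∏ i, (openNeighborhood (H i) '' M).encard := Set.encard_pi_eq_prod_encard
    _ ≤ ∏ _i : ι, ((d : ℕ∞) + 1) := Finset.prod_le_prod' fun i _ =>
        (hw i).encard_image_openNeighborhood_le (hcover ▸ le_iSup H i) hdeg
    _ = (d + 1) ^ Fintype.card ι := by simp

/-- if `G` (with at least one vertex) has maximum degree at most `d`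
and its edge set is the union of the edge sets of `k` threshold graphs, then `G`
has at most `(d+1)^k` maximal independent sets. -/
theorem numMaximalIndep_le_pow_of_threshold_cover_max_degree
    {V : Type} [Fintype V] [Nonempty V] {k : ℕ} (hk : 0 < k)
    (G : SimpleGraph V) [DecidableRel G.Adj]
    (Gs : Fin k → SimpleGraph V)
    (hth : ∀ i, (Gs i).IsThreshold)
    (hcover : G = ⨆ i, Gs i)
    (d : ℕ) (hdeg : ∀ v, G.degree v ≤ d) :
    numMaximalIndep G ≤ (d + 1) ^ k := by
  choose w hw using fun i => exists_isDominanceRank_of_isThreshold (hth i)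
  have h := numMaximalIndep_le_pow_of_threshold_cover_max_degree_general G Gs w hw hcover d
    fun v => (Set.coe_fintypeCard _).symm.trans_le
      (by exact_mod_cast (G.card_neighborSet_eq_degree v).trans_le (hdeg v))
  rw [Fintype.card_fin, ← (Set.toFinite _).cast_ncard_eq] at h
  exact_mod_cast h
end
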